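/- Let S > 0, 0 < δ₁ < S, δ₂ > 0, r > 0. Let χ : [0,S] × ∂Ω → [0,∞) be continuous with χ(t,x) = δ₂ for all (t,x) ∈ [δ₁,S] × ∂Ω, and let q : (0,S) × Ω → ℝ be continuous and bounded. Let F : [0,S] × cl(Ω) × ℝ → ℝ be continuous, twice continuously differentiable in the last variable, with: F(t,x,0) = 0 for all (t,x); ∂²_uF(t,x,u) ≤ 0 for u ≥ 0 and ∂²_uF(t,x,u) ≥ 0 for u ≤ 0; and ∂_uF(t,x,0) ≤ q(t,x) for all (t,x) ∈ (0,S) × Ω. Suppose that for each λ ∈ [−r,r] there are functions v_λ, v⁽¹⁾_λ, v⁽²⁾_λ : [0,S] × cl(Ω) → ℝ such that, setting V_λ(t,x) := ∂_uF(t,x,v_λ(t,x)): (i) v_λ is a classical solution of ∂_t v − Δv + F(t,x,v) = 0 in (0,S) × Ω with lateral boundary values λχ and zero initial values, and v_0 ≡ 0; (ii) v⁽¹⁾_λ is a classical solution of ∂_t u − Δu + V_λ u = 0 with lateral boundary values χ and zero initial values; (iii) v⁽²⁾_λ is a classical solution of ∂_t u − Δu + V_λ u = −∂²_uF(t,x,v_λ(t,x))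 (v⁽¹⁾_λ(t,x))² with zero lateral boundary values and zero initial values; (iv) for each (t,x) ∈ [0,S] × cl(Ω), λ ↦ v_λ(t,x) is continuous on [−r,r] and differentiable on (−r,r) with derivative v⁽¹⁾_λ(t,x), and λ ↦ v⁽¹⁾_λ(t,x) is differentiable on (−r,r) with derivative v⁽²⁾_λ(t,x). Let w be a classical solution of ∂_t w − Δw + q w = 0 in (0,S) × Ω with lateral boundary values χ and zero initial values, and set a₁ := inf { w(t,x) : (t,x) ∈ [δ₁,S] × cl(Ω) }. Then a₁ > 0 and, for every (t₀,x₀) ∈ (δ₁,S) × Ω and every s ∈ [−a₁ r, a₁ r], there exists λ ∈ [−r,r] such that v_λ(t₀,x₀) = s. -/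

import Mathlib

open Set

namespace Paper

noncomputable section

/-- Time derivative `∂ₜu`. -/
def timeDeriv {n : ℕ} (u : ℝ → (Fin n → ℝ) → ℝ) (t : ℝ) (x : Fin n → ℝ) : ℝ :=
  deriv (fun s => u s x) t

/-- Spatial partial derivative `∂ᵢu`. -/
def spatialDeriv {n : ℕ} (u : ℝ → (Fin n → ℝ) → ℝ) (i : Fin n) (t : ℝ) (x : Fin n → ℝ) : ℝ :=
  deriv (fun s => u t (Function.update x i s)) (x i)

/-- Second spatial partial derivative `∂ᵢ∂ⱼu`. -/
def spatialDeriv2 {n : ℕ} (u : ℝ → (Fin n → ℝ) → ℝ) (i j : Fin n) (t : ℝ)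
    (x : Fin n → ℝ) : ℝ :=
  spatialDeriv (spatialDeriv u j) i t x

/-- Laplacian in the space variables. -/
def laplacian {n : ℕ} (u : ℝ → (Fin n → ℝ) → ℝ) (t : ℝ) (x : Fin n → ℝ) : ℝ :=
  ∑ i, spatialDeriv2 u i i t x

/-- Parabolic regularity: `u` is continuous on `[0,S] × cl Ω`, and `∂ₜu` together with all
spatial partial derivatives of `u` up to order 2 exist and are continuous on `(0,S) × Ω`. -/
structure ParabolicRegular {n : ℕ} (Ω : Set (Fin n → ℝ)) (S : ℝ)
    (u : ℝ → (Fin n → ℝ) → ℝ) : Prop where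
  cont : ContinuousOn (fun p : ℝ × (Fin n → ℝ) => u p.1 p.2) (Icc 0 S ×ˢ closure Ω)
  diff_t : ∀ t ∈ Ioo 0 S, ∀ x ∈ Ω, DifferentiableAt ℝ (fun s => u s x) t
  diff_x : ∀ t ∈ Ioo 0 S, ∀ x ∈ Ω, ∀ i,
    DifferentiableAt ℝ (fun s => u t (Function.update x i s)) (x i)
  diff_xx : ∀ t ∈ Ioo 0 S, ∀ x ∈ Ω, ∀ i j,
    DifferentiableAt ℝ (fun s => spatialDeriv u j t (Function.update x i s)) (x i)
  cont_t : ContinuousOn (fun p : ℝ × (Fin n → ℝ) => timeDeriv u p.1 p.2) (Ioo 0 S ×ˢ Ω)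
  cont_x : ∀ i, ContinuousOn (fun p : ℝ × (Fin n → ℝ) => spatialDeriv u i p.1 p.2)
    (Ioo 0 S ×ˢ Ω)
  cont_xx : ∀ i j, ContinuousOn (fun p : ℝ × (Fin n → ℝ) => spatialDeriv2 u i j p.1 p.2)
    (Ioo 0 S ×ˢ Ω)

/-- Classical solution of `∂ₜu − Δu + c u = f` in `(0,S) × Ω` with lateral boundary values `g`
and zero initial values. -/
structure IsClassicalSolution {n : ℕ} (Ω : Set (Fin n → ℝ)) (S : ℝ)
    (c f g u : ℝ → (Fin n → ℝ) → ℝ) extends ParabolicRegular Ω S u : Prop where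
  eqn : ∀ t ∈ Ioo 0 S, ∀ x ∈ Ω, timeDeriv u t x - laplacian u t x + c t x * u t x = f t x
  lateral : ∀ t ∈ Icc 0 S, ∀ x ∈ frontier Ω, u t x = g t x
  initial : ∀ x ∈ closure Ω, u 0 x = 0

/-- `∂_u F` for a semilinear term `F(t,x,u)`. -/
def uDeriv {n : ℕ} (F : ℝ → (Fin n → ℝ) → ℝ → ℝ) (t : ℝ) (x : Fin n → ℝ) (u : ℝ) : ℝ :=
  deriv (F t x) u

/-- `∂_u² F`. -/
def uDeriv2 {n : ℕ} (F : ℝ → (Fin n → ℝ) → ℝ → ℝ) : ℝ → (Fin n → ℝ) → ℝ → ℝ :=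
  uDeriv (uDeriv F)

/-- `∂_u³ F`. -/
def uDeriv3 {n : ℕ} (F : ℝ → (Fin n → ℝ) → ℝ → ℝ) : ℝ → (Fin n → ℝ) → ℝ → ℝ :=
  uDeriv (uDeriv2 F)

/-- `∂_u⁴ F`. -/
def uDeriv4 {n : ℕ} (F : ℝ → (Fin n → ℝ) → ℝ → ℝ) : ℝ → (Fin n → ℝ) → ℝ → ℝ :=
  uDeriv (uDeriv3 F)

/-- `∂ₜF` for `F` depending on `(t,x,u)`. -/
def FtDeriv {n : ℕ} (F : ℝ → (Fin n → ℝ) → ℝ → ℝ) (t : ℝ) (x : Fin n → ℝ) (u : ℝ) : ℝ :=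
  deriv (fun s => F s x u) t

/-- `∂_{xᵢ}F` for `F` depending on `(t,x,u)`. -/
def FxDeriv {n : ℕ} (F : ℝ → (Fin n → ℝ) → ℝ → ℝ) (i : Fin n) (t : ℝ) (x : Fin n → ℝ)
    (u : ℝ) : ℝ :=
  deriv (fun s => F t (Function.update x i s) u) (x i)

/-- `F` is continuous on `[0,S] × cl Ω × ℝ` and continuously differentiable in the last
variable. -/
def C1InU {n : ℕ} (Ω : Set (Fin n → ℝ)) (S : ℝ) (F : ℝ → (Fin n → ℝ) → ℝ → ℝ) : Prop :=
  ContinuousOn (fun p : ℝ × (Fin n → ℝ) × ℝ => F p.1 p.2.1 p.2.2)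
    (Icc 0 S ×ˢ closure Ω ×ˢ (univ : Set ℝ)) ∧
  (∀ t ∈ Icc 0 S, ∀ x ∈ closure Ω, ∀ u : ℝ, DifferentiableAt ℝ (F t x) u) ∧
  ContinuousOn (fun p : ℝ × (Fin n → ℝ) × ℝ => uDeriv F p.1 p.2.1 p.2.2)
    (Icc 0 S ×ˢ closure Ω ×ˢ (univ : Set ℝ))

/-- `F` is continuous and twice continuously differentiable in the last variable. -/
def C2InU {n : ℕ} (Ω : Set (Fin n → ℝ)) (S : ℝ) (F : ℝ → (Fin n → ℝ) → ℝ → ℝ) : Prop :=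
  C1InU Ω S F ∧
  (∀ t ∈ Icc 0 S, ∀ x ∈ closure Ω, ∀ u : ℝ, DifferentiableAt ℝ (uDeriv F t x) u) ∧
  ContinuousOn (fun p : ℝ × (Fin n → ℝ) × ℝ => uDeriv2 F p.1 p.2.1 p.2.2)
    (Icc 0 S ×ˢ closure Ω ×ˢ (univ : Set ℝ))

/-- `‖f‖_{W^{1,∞}} ≤ B` on `[0,S] × cl Ω`, stated componentwise: `f`, `∂ₜf` and all `∂ᵢf`
are bounded by `B` in absolute value. -/
def W1infLE {n : ℕ} (Ω : Set (Fin n → ℝ)) (S : ℝ) (f : ℝ → (Fin n → ℝ) → ℝ) (B : ℝ) : Prop :=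
  ∀ t ∈ Icc 0 S, ∀ x ∈ closure Ω,
    |f t x| ≤ B ∧ |timeDeriv f t x| ≤ B ∧ ∀ i, |spatialDeriv f i t x| ≤ B

/-- `f` has bounded continuous first-order derivatives on `[0,S] × cl Ω`. -/
def C1Bounded {n : ℕ} (Ω : Set (Fin n → ℝ)) (S : ℝ) (f : ℝ → (Fin n → ℝ) → ℝ) : Prop :=
  (∀ t ∈ Icc 0 S, ∀ x ∈ closure Ω, DifferentiableAt ℝ (fun s => f s x) t ∧
    ∀ i, DifferentiableAt ℝ (fun s => f t (Function.update x i s)) (x i)) ∧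
  ContinuousOn (fun p : ℝ × (Fin n → ℝ) => f p.1 p.2) (Icc 0 S ×ˢ closure Ω) ∧
  ContinuousOn (fun p : ℝ × (Fin n → ℝ) => timeDeriv f p.1 p.2) (Icc 0 S ×ˢ closure Ω) ∧
  (∀ i, ContinuousOn (fun p : ℝ × (Fin n → ℝ) => spatialDeriv f i p.1 p.2)
    (Icc 0 S ×ˢ closure Ω)) ∧
  ∃ B, W1infLE Ω S f B

/-- Componentwise bound `‖f‖_* ≤ ε` for the parabolic Schauder norm of
`C([0,S];C^{2+α}(cl Ω)) ∩ C^{1+α/2}([0,S];C(cl Ω))`: sup bounds on `f`, `∂ₜf`, spatial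
derivatives up to order 2, the `α`-Hölder (in `x`) seminorms of the second spatial derivatives,
and the `α/2`-Hölder (in `t`) seminorm of `∂ₜf`. -/
def SchauderLE {n : ℕ} (α : ℝ) (Ω : Set (Fin n → ℝ)) (S : ℝ) (f : ℝ → (Fin n → ℝ) → ℝ)
    (ε : ℝ) : Prop :=
  (∀ t ∈ Icc 0 S, ∀ x ∈ closure Ω,
    |f t x| ≤ ε ∧ |timeDeriv f t x| ≤ ε ∧ (∀ i, |spatialDeriv f i t x| ≤ ε) ∧
    ∀ i j, |spatialDeriv2 f i j t x| ≤ ε) ∧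
  (∀ t ∈ Icc 0 S, ∀ x ∈ closure Ω, ∀ x' ∈ closure Ω, ∀ i j,
    |spatialDeriv2 f i j t x - spatialDeriv2 f i j t x'| ≤ ε * dist x x' ^ α) ∧
  (∀ x ∈ closure Ω, ∀ t ∈ Icc 0 S, ∀ t' ∈ Icc 0 S,
    |timeDeriv f t x - timeDeriv f t' x| ≤ ε * |t - t'| ^ (α / 2))

/-- `G`, `∂ₜG` and the `∂_{xᵢ}G` exist and are continuous on `[0,S] × cl Ω × ℝ`. -/
def C1InTX {n : ℕ} (Ω : Set (Fin n → ℝ)) (S : ℝ) (G : ℝ → (Fin n → ℝ) → ℝ → ℝ) : Prop :=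
  (∀ t ∈ Icc 0 S, ∀ x ∈ closure Ω, ∀ u : ℝ,
    DifferentiableAt ℝ (fun s => G s x u) t ∧
    ∀ i, DifferentiableAt ℝ (fun s => G t (Function.update x i s) u) (x i)) ∧
  ContinuousOn (fun p : ℝ × (Fin n → ℝ) × ℝ => G p.1 p.2.1 p.2.2)
    (Icc 0 S ×ˢ closure Ω ×ˢ (univ : Set ℝ)) ∧
  ContinuousOn (fun p : ℝ × (Fin n → ℝ) × ℝ => FtDeriv G p.1 p.2.1 p.2.2)
    (Icc 0 S ×ˢ closure Ω ×ˢ (univ : Set ℝ)) ∧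
  ∀ i, ContinuousOn (fun p : ℝ × (Fin n → ℝ) × ℝ => FxDeriv G i p.1 p.2.1 p.2.2)
    (Icc 0 S ×ˢ closure Ω ×ˢ (univ : Set ℝ))

/-- `G`, `∂ₜG` and the `∂_{xᵢ}G` are bounded by `κ(|u|)` on `[0,S] × cl Ω`, for every `u`. -/
def BoundedByKappa {n : ℕ} (Ω : Set (Fin n → ℝ)) (S : ℝ) (G : ℝ → (Fin n → ℝ) → ℝ → ℝ)
    (κ : ℝ → ℝ) : Prop :=
  ∀ u : ℝ, ∀ t ∈ Icc 0 S, ∀ x ∈ closure Ω,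
    |G t x u| ≤ κ |u| ∧ |FtDeriv G t x u| ≤ κ |u| ∧ ∀ i, |FxDeriv G i t x u| ≤ κ |u|

/-- The family of solutions of the semilinear problem with boundary data `λχ`, together with
its first and second linearizations in the boundary parameter `λ`. -/
structure SemilinearFamily {n : ℕ} (Ω : Set (Fin n → ℝ)) (S r : ℝ)
    (χ : ℝ → (Fin n → ℝ) → ℝ) (F : ℝ → (Fin n → ℝ) → ℝ → ℝ)
    (v v1 v2 : ℝ → ℝ → (Fin n → ℝ) → ℝ) : Prop where
  sol : ∀ lam ∈ Icc (-r) r, IsClassicalSolution Ω S (fun _ _ => (0 : ℝ))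
      (fun t x => -F t x (v lam t x)) (fun t x => lam * χ t x) (v lam)
  zero : ∀ t ∈ Icc 0 S, ∀ x ∈ closure Ω, v 0 t x = 0
  lin1 : ∀ lam ∈ Icc (-r) r, IsClassicalSolution Ω S
      (fun t x => uDeriv F t x (v lam t x)) (fun _ _ => (0 : ℝ)) χ (v1 lam)
  lin2 : ∀ lam ∈ Icc (-r) r, IsClassicalSolution Ω S
      (fun t x => uDeriv F t x (v lam t x))
      (fun t x => -uDeriv2 F t x (v lam t x) * (v1 lam t x) ^ 2) (fun _ _ => (0 : ℝ)) (v2 lam)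
  cont_lam : ∀ t ∈ Icc 0 S, ∀ x ∈ closure Ω, ContinuousOn (fun lam => v lam t x) (Icc (-r) r)
  deriv1 : ∀ t ∈ Icc 0 S, ∀ x ∈ closure Ω, ∀ lam ∈ Ioo (-r) r,
      HasDerivAt (fun μ => v μ t x) (v1 lam t x) lam
  deriv2 : ∀ t ∈ Icc 0 S, ∀ x ∈ closure Ω, ∀ lam ∈ Ioo (-r) r,
      HasDerivAt (fun μ => v1 μ t x) (v2 lam t x) lam

end

end Paper

open Paper Set

/-!
Comparison between solutions comes from looking at a negative minimum of `e^{-kt} z`. For the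
linear solution `w` it gives strict positivity on `[δ₁, S] × cl Ω`: the boundary values are still
positive slightly before `δ₁`, and a plane wave `exp (a (t - t₀) + b · x - β) - 1` started there,
whose exponent `a = |b|² - C` grows faster in `b` than the range of `b · x` over `Ω`, is a
subsolution where it is nonnegative, and positive on all of `cl Ω` after an arbitrarily short time.

Since `F` vanishes at `u = 0`, is concave on `u ≥ 0` and convex on `u ≤ 0`, the tangent at `0`
bounds it from above on `u ≥ 0` and from below on `u ≤ 0`, hence `F ≤ q u` for `u ≥ 0` and
`q u ≤ F` for `u ≤ 0`. As `v_r ≥ 0` (by comparison with `0`, `F` being locally Lipschitz in `u`),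
it is a supersolution of the linear equation with boundary values `rχ`, so `r w ≤ v_r`, and
likewise `v_{-r} ≤ -r w`. The intermediate value theorem in `λ` then covers `[-a₁ r, a₁ r]`.
-/

namespace Paper

open Filter Topology

section Calculus

theorem deriv_deriv_nonneg_of_isLocalMin {f : ℝ → ℝ} {a : ℝ} (hmin : IsLocalMin f a)
    (hf : ContinuousAt f a) : 0 ≤ deriv (deriv f) a := by
  by_contra! hneg
  have hmax : IsLocalMax f a := isLocalMax_of_deriv_deriv_neg hneg hmin.deriv_eq_zero hf
  have hconst : f =ᶠ[𝓝 a] fun _ => f a := by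
    filter_upwards [hmin, hmax] with s hge hle using le_antisymm hle hge
  exact hneg.ne (by simpa using hconst.deriv.deriv_eq)

theorem deriv_nonpos_of_isMinOn_Icc {f : ℝ → ℝ} {f' a b : ℝ} (hab : a < b)
    (hf : HasDerivAt f f' b) (hmin : IsMinOn f (Icc a b) b) : f' ≤ 0 := by
  have htangent : a - b ∈ posTangentConeAt (Icc a b) b :=
    sub_mem_posTangentConeAt_of_segment_subset
      (segment_symm ℝ a b ▸ (segment_eq_Icc hab.le).subset)
  have hslope : 0 ≤ (a - b) * f' := by
    simpa using hmin.localize.hasFDerivWithinAt_nonneg hf.hasFDerivAt.hasFDerivWithinAt htangent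
  exact nonpos_of_mul_nonneg_right hslope (sub_neg.2 hab)

theorem exists_pos_mul_lt_sq_sub_mul (k C : ℝ) {ε : ℝ} (hε : 0 < ε) :
    ∃ B > 0, k * B < (B ^ 2 - C) * ε := by
  have hlim : Tendsto (fun B : ℝ => B * (B * ε - k)) atTop atTop :=
    tendsto_id.atTop_mul_atTop₀ (tendsto_atTop_add_const_right _ _
      (tendsto_id.atTop_mul_const hε))
  obtain ⟨B, hB, hB0⟩ := ((hlim.eventually_gt_atTop (C * ε)).and (eventually_gt_atTop 0)).exists
  exact ⟨B, hB0, by linarith⟩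

theorem eventually_update_mem {ι : Type*} [DecidableEq ι] {A : ι → Type*}
    [∀ i, TopologicalSpace (A i)] {s : Set (∀ i, A i)} (hs : IsOpen s) {x : ∀ i, A i}
    (hx : x ∈ s) (i : ι) : ∀ᶠ a in 𝓝 (x i), Function.update x i a ∈ s := by
  have hcont : ContinuousAt (fun a => Function.update x i a) (x i) := by fun_prop
  exact hcont.eventually_mem (hs.mem_nhds (by simpa using hx))

theorem exists_Icc_forall_pos {X : Type*} [TopologicalSpace X] {K : Set X} (hK : IsCompact K)
    {f : ℝ → X → ℝ} {a b c : ℝ} (hac : a < c) (hcb : c ≤ b)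
    (hf : ContinuousOn (fun p : ℝ × X => f p.1 p.2) (Icc a b ×ˢ K))
    (hpos : ∀ t ∈ Icc c b, ∀ x ∈ K, 0 < f t x) :
    ∃ t₀ ∈ Ico a c, ∀ t ∈ Icc t₀ b, ∀ x ∈ K, 0 < f t x := by
  have hnear : ∀ᶠ t in 𝓝 c, ∀ x ∈ K, t ∈ Icc a b → x ∈ K → 0 < f t x := by
    refine hK.eventually_forall_of_forall_eventually fun x hx => ?_
    have hcx : (c, x) ∈ Icc a b ×ˢ K := ⟨⟨hac.le, hcb⟩, hx⟩
    filter_upwards [eventually_nhdsWithin_iff.1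
      ((hf _ hcx).eventually (lt_mem_nhds (hpos c ⟨le_rfl, hcb⟩ x hx)))] with p hp ht hy
    exact hp ⟨ht, hy⟩
  obtain ⟨l, hlc, hl⟩ := mem_nhdsLE_iff_exists_Icc_subset.1 (mem_nhdsWithin_of_mem_nhds hnear)
  refine ⟨max a l, ⟨le_max_left a l, max_lt hac hlc⟩, fun t ht x hx => ?_⟩
  rcases le_total t c with htc | hct
  · exact hl ⟨(le_max_right a l).trans ht.1, htc⟩ x hx ⟨(le_max_left a l).trans ht.1, ht.2⟩ hx
  · exact hpos t ⟨hct, ht.2⟩ x hx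

theorem sInf_image_pos {X : Type*} [TopologicalSpace X] {K : Set X} (hK : IsCompact K)
    (hne : K.Nonempty) {f : X → ℝ} (hf : ContinuousOn f K) (hpos : ∀ x ∈ K, 0 < f x) :
    0 < sInf (f '' K) := by
  obtain ⟨x, hx, hfx⟩ := (hK.image_of_continuousOn hf).sInf_mem (hne.image f)
  exact hfx ▸ hpos x hx

theorem deriv_mul_sub_le_of_convexOn {f : ℝ → ℝ} {s : Set ℝ} (hf : ConvexOn ℝ s f) {a b : ℝ}
    (ha : a ∈ s) (hb : b ∈ s) (hd : DifferentiableAt ℝ f a) :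
    deriv f a * (b - a) ≤ f b - f a := by
  rcases lt_trichotomy a b with hab | rfl | hba
  · have hslope := hf.deriv_le_slope ha hb hab hd
    rwa [slope_def_field, le_div_iff₀ (sub_pos.2 hab)] at hslope
  · simp
  · have hslope := hf.slope_le_deriv hb ha hba hd
    rw [slope_def_field, div_le_iff₀ (sub_pos.2 hba)] at hslope
    linarith

theorem le_deriv_mul_sub_of_concaveOn {f : ℝ → ℝ} {s : Set ℝ} (hf : ConcaveOn ℝ s f) {a b : ℝ}
    (ha : a ∈ s) (hb : b ∈ s) (hd : DifferentiableAt ℝ f a) :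
    f b - f a ≤ deriv f a * (b - a) := by
  have htangent := deriv_mul_sub_le_of_convexOn hf.neg ha hb hd.neg
  rw [deriv.neg] at htangent
  simp only [Pi.neg_apply] at htangent
  linarith

end Calculus

section HeatOperator

variable {n : ℕ} {Ω : Set (Fin n → ℝ)} {S : ℝ} {u v : ℝ → (Fin n → ℝ) → ℝ}
  {t : ℝ} {x : Fin n → ℝ}

/-- The heat operator `∂ₜ - Δ`. -/
noncomputable def heatOp (u : ℝ → (Fin n → ℝ) → ℝ) (t : ℝ) (x : Fin n → ℝ) : ℝ :=
  timeDeriv u t x - laplacian u t x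

theorem spatialDeriv_update (u : ℝ → (Fin n → ℝ) → ℝ) (i : Fin n) (t : ℝ) (x : Fin n → ℝ) (s : ℝ) :
    spatialDeriv u i t (Function.update x i s) =
      deriv (fun r => u t (Function.update x i r)) s := by
  simp [spatialDeriv]

theorem laplacian_eq_sum_deriv_deriv (u : ℝ → (Fin n → ℝ) → ℝ) (t : ℝ) (x : Fin n → ℝ) :
    laplacian u t x = ∑ i, deriv (deriv fun s => u t (Function.update x i s)) (x i) := by
  refine Finset.sum_congr rfl fun i _ => ?_
  unfold spatialDeriv2
  rw [spatialDeriv.eq_def (spatialDeriv u i)]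
  simp only [spatialDeriv_update]

theorem laplacian_nonneg_of_isLocalMin (hmin : IsLocalMin (u t) x) (hu : ContinuousAt (u t) x) :
    0 ≤ laplacian u t x := by
  rw [laplacian_eq_sum_deriv_deriv]
  refine Finset.sum_nonneg fun i _ => ?_
  have hline : Tendsto (Function.update x i) (𝓝 (x i)) (𝓝 x) := by
    have hcont : Continuous fun s => Function.update x i s := by fun_prop
    simpa using hcont.tendsto (x i)
  refine deriv_deriv_nonneg_of_isLocalMin ?_ ?_
  · filter_upwards [hline.eventually hmin] with s hs
    simpa using hs
  · simpa [ContinuousAt, Function.comp_def] using hu.tendsto.comp hline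

theorem timeDeriv_const_smul (k : ℝ) (u : ℝ → (Fin n → ℝ) → ℝ) :
    timeDeriv (k • u) = k • timeDeriv u := by
  ext t x
  exact deriv_const_mul_field k

theorem spatialDeriv_const_smul (k : ℝ) (u : ℝ → (Fin n → ℝ) → ℝ) (i : Fin n) :
    spatialDeriv (k • u) i = k • spatialDeriv u i := by
  ext t x
  exact deriv_const_mul_field k

theorem spatialDeriv2_const_smul (k : ℝ) (u : ℝ → (Fin n → ℝ) → ℝ) (i j : Fin n) :
    spatialDeriv2 (k • u) i j = k • spatialDeriv2 u i j := by
  ext t x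
  simp only [spatialDeriv2, spatialDeriv_const_smul]
  rfl

theorem heatOp_const_smul (k : ℝ) (u : ℝ → (Fin n → ℝ) → ℝ) :
    heatOp (k • u) = k • heatOp u := by
  ext t x
  simp only [heatOp, laplacian, timeDeriv_const_smul, spatialDeriv2_const_smul, Pi.smul_apply,
    smul_eq_mul, mul_sub, Finset.mul_sum]

theorem heatOp_sub_const (u : ℝ → (Fin n → ℝ) → ℝ) (k : ℝ) :
    heatOp (u - fun _ _ => k) = heatOp u := by
  ext t x
  simp [heatOp, laplacian, timeDeriv, spatialDeriv2, spatialDeriv, deriv_sub_const]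

namespace ParabolicRegular

theorem const (k : ℝ) : ParabolicRegular Ω S fun _ _ => k := by
  constructor <;> simp [timeDeriv, spatialDeriv2, spatialDeriv, continuousOn_const]

theorem const_smul (k : ℝ) (hu : ParabolicRegular Ω S u) : ParabolicRegular Ω S (k • u) where
  cont := hu.cont.const_smul k
  diff_t t ht x hx := (hu.diff_t t ht x hx).const_smul k
  diff_x t ht x hx i := (hu.diff_x t ht x hx i).const_smul k
  diff_xx t ht x hx i j := by
    simpa only [spatialDeriv_const_smul] using! (hu.diff_xx t ht x hx i j).const_smul k
  cont_t := by simpa only [timeDeriv_const_smul] using! hu.cont_t.const_smul k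
  cont_x i := by simpa only [spatialDeriv_const_smul] using! (hu.cont_x i).const_smul k
  cont_xx i j := by simpa only [spatialDeriv2_const_smul] using! (hu.cont_xx i j).const_smul k

theorem timeDeriv_add (hu : ParabolicRegular Ω S u) (hv : ParabolicRegular Ω S v)
    (ht : t ∈ Ioo 0 S) (hx : x ∈ Ω) :
    timeDeriv (u + v) t x = timeDeriv u t x + timeDeriv v t x :=
  deriv_fun_add (hu.diff_t t ht x hx) (hv.diff_t t ht x hx)

theorem spatialDeriv_add (hu : ParabolicRegular Ω S u) (hv : ParabolicRegular Ω S v)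
    (ht : t ∈ Ioo 0 S) (hx : x ∈ Ω) (i : Fin n) :
    spatialDeriv (u + v) i t x = spatialDeriv u i t x + spatialDeriv v i t x :=
  deriv_fun_add (hu.diff_x t ht x hx i) (hv.diff_x t ht x hx i)

theorem eventuallyEq_spatialDeriv_add (hΩ : IsOpen Ω) (hu : ParabolicRegular Ω S u)
    (hv : ParabolicRegular Ω S v) (ht : t ∈ Ioo 0 S) (hx : x ∈ Ω) (i j : Fin n) :
    (fun s => spatialDeriv (u + v) j t (Function.update x i s)) =ᶠ[𝓝 (x i)] fun s =>
      spatialDeriv u j t (Function.update x i s) + spatialDeriv v j t (Function.update x i s) := by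
  filter_upwards [eventually_update_mem hΩ hx i] with s hs using hu.spatialDeriv_add hv ht hs j

theorem spatialDeriv2_add (hΩ : IsOpen Ω) (hu : ParabolicRegular Ω S u)
    (hv : ParabolicRegular Ω S v) (ht : t ∈ Ioo 0 S) (hx : x ∈ Ω) (i j : Fin n) :
    spatialDeriv2 (u + v) i j t x = spatialDeriv2 u i j t x + spatialDeriv2 v i j t x :=
  (hu.eventuallyEq_spatialDeriv_add hΩ hv ht hx i j).deriv_eq.trans
    (deriv_fun_add (hu.diff_xx t ht x hx i j) (hv.diff_xx t ht x hx i j))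

theorem heatOp_add (hΩ : IsOpen Ω) (hu : ParabolicRegular Ω S u) (hv : ParabolicRegular Ω S v)
    (ht : t ∈ Ioo 0 S) (hx : x ∈ Ω) : heatOp (u + v) t x = heatOp u t x + heatOp v t x := by
  simp only [heatOp, laplacian, hu.timeDeriv_add hv ht hx, hu.spatialDeriv2_add hΩ hv ht hx,
    Finset.sum_add_distrib]
  ring

theorem add (hΩ : IsOpen Ω) (hu : ParabolicRegular Ω S u) (hv : ParabolicRegular Ω S v) :
    ParabolicRegular Ω S (u + v) where
  cont := hu.cont.add hv.cont
  diff_t t ht x hx := (hu.diff_t t ht x hx).add (hv.diff_t t ht x hx)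
  diff_x t ht x hx i := (hu.diff_x t ht x hx i).add (hv.diff_x t ht x hx i)
  diff_xx t ht x hx i j :=
    ((hu.diff_xx t ht x hx i j).add (hv.diff_xx t ht x hx i j)).congr_of_eventuallyEq
      (hu.eventuallyEq_spatialDeriv_add hΩ hv ht hx i j)
  cont_t := (hu.cont_t.add hv.cont_t).congr fun _ hp => hu.timeDeriv_add hv hp.1 hp.2
  cont_x i := ((hu.cont_x i).add (hv.cont_x i)).congr fun _ hp =>
    hu.spatialDeriv_add hv hp.1 hp.2 i
  cont_xx i j := ((hu.cont_xx i j).add (hv.cont_xx i j)).congr fun _ hp =>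
    hu.spatialDeriv2_add hΩ hv hp.1 hp.2 i j

theorem sub (hΩ : IsOpen Ω) (hu : ParabolicRegular Ω S u) (hv : ParabolicRegular Ω S v) :
    ParabolicRegular Ω S (u - v) := by
  simpa [sub_eq_add_neg] using hu.add hΩ (hv.const_smul (-1))

theorem heatOp_sub (hΩ : IsOpen Ω) (hu : ParabolicRegular Ω S u) (hv : ParabolicRegular Ω S v)
    (ht : t ∈ Ioo 0 S) (hx : x ∈ Ω) : heatOp (u - v) t x = heatOp u t x - heatOp v t x := by
  rw [sub_eq_add_neg, ← neg_one_smul ℝ v, hu.heatOp_add hΩ (hv.const_smul (-1)) ht hx,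
    heatOp_const_smul, Pi.smul_apply, Pi.smul_apply, neg_one_smul, sub_eq_add_neg]

end ParabolicRegular

/-- The plane wave `exp (a t + b · x + c)`, from which barriers are built. -/
noncomputable def expWave (a : ℝ) (b : Fin n → ℝ) (c : ℝ) (t : ℝ) (x : Fin n → ℝ) : ℝ :=
  Real.exp (a * t + b ⬝ᵥ x + c)

theorem hasDerivAt_expWave_time (a : ℝ) (b : Fin n → ℝ) (c t : ℝ) (x : Fin n → ℝ) :
    HasDerivAt (fun s => expWave a b c s x) (a * expWave a b c t x) t := by
  simpa [mul_comm, expWave] using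
    ((((hasDerivAt_id t).const_mul a).add_const (b ⬝ᵥ x)).add_const c).exp

theorem hasDerivAt_expWave_space (a : ℝ) (b : Fin n → ℝ) (c t : ℝ) (x : Fin n → ℝ) (i : Fin n) :
    HasDerivAt (fun s => expWave a b c t (Function.update x i s)) (b i * expWave a b c t x)
      (x i) := by
  have hdot : HasDerivAt (fun s => b ⬝ᵥ Function.update x i s) (b i) (x i) := by
    simpa [dotProduct, Pi.single_apply] using HasDerivAt.fun_sum fun j (_ : j ∈ Finset.univ) =>
      (hasDerivAt_pi.1 (hasDerivAt_update x i (x i)) j).const_mul (b j)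
  simpa [mul_comm, expWave] using ((hdot.const_add (a * t)).add_const c).exp

theorem timeDeriv_expWave (a : ℝ) (b : Fin n → ℝ) (c : ℝ) :
    timeDeriv (expWave a b c) = a • expWave a b c := by
  ext t x
  exact (hasDerivAt_expWave_time a b c t x).deriv

theorem spatialDeriv_expWave (a : ℝ) (b : Fin n → ℝ) (c : ℝ) (i : Fin n) :
    spatialDeriv (expWave a b c) i = b i • expWave a b c := by
  ext t x
  exact (hasDerivAt_expWave_space a b c t x i).deriv

theorem spatialDeriv2_expWave (a : ℝ) (b : Fin n → ℝ) (c : ℝ) (i j : Fin n) :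
    spatialDeriv2 (expWave a b c) i j = b j • b i • expWave a b c := by
  ext t x
  simp only [spatialDeriv2, spatialDeriv_expWave, spatialDeriv_const_smul]

theorem continuous_expWave (a : ℝ) (b : Fin n → ℝ) (c : ℝ) :
    Continuous fun p : ℝ × (Fin n → ℝ) => expWave a b c p.1 p.2 := by
  unfold expWave dotProduct
  fun_prop

theorem parabolicRegular_expWave (a : ℝ) (b : Fin n → ℝ) (c : ℝ) :
    ParabolicRegular Ω S (expWave a b c) where
  cont := (continuous_expWave a b c).continuousOn
  diff_t t _ x _ := (hasDerivAt_expWave_time a b c t x).differentiableAt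
  diff_x t _ x _ i := (hasDerivAt_expWave_space a b c t x i).differentiableAt
  diff_xx t _ x _ i j := by
    rw [spatialDeriv_expWave]
    exact (hasDerivAt_expWave_space a b c t x i).differentiableAt.const_smul (b j)
  cont_t := by
    rw [timeDeriv_expWave]
    exact ((continuous_expWave a b c).const_smul a).continuousOn
  cont_x i := by
    rw [spatialDeriv_expWave]
    exact ((continuous_expWave a b c).const_smul (b i)).continuousOn
  cont_xx i j := by
    rw [spatialDeriv2_expWave]
    exact (((continuous_expWave a b c).const_smul (b i)).const_smul (b j)).continuousOn

theorem heatOp_expWave (a : ℝ) (b : Fin n → ℝ) (c : ℝ) :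
    heatOp (expWave a b c) = (a - b ⬝ᵥ b) • expWave a b c := by
  ext t x
  simp only [heatOp, laplacian, timeDeriv_expWave, spatialDeriv2_expWave, Pi.smul_apply,
    smul_eq_mul, dotProduct, sub_mul, Finset.sum_mul, mul_assoc]

end HeatOperator

section MaximumPrinciple

variable {n : ℕ} {Ω : Set (Fin n → ℝ)} {S : ℝ} {q f g u v z : ℝ → (Fin n → ℝ) → ℝ}

namespace ParabolicRegular

theorem heatOp_le_of_isMinOn (hΩ : IsOpen Ω) (hz : ParabolicRegular Ω S z) {k t : ℝ}
    {x : Fin n → ℝ} (ht : t ∈ Ioo 0 S) (hx : x ∈ Ω)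
    (hmin : IsMinOn (fun p : ℝ × (Fin n → ℝ) => Real.exp (-k * p.1) * z p.1 p.2)
      (Icc 0 t ×ˢ Ω) (t, x)) :
    heatOp z t x ≤ k * z t x := by
  have hcont : ContinuousAt (z t) x :=
    (hz.cont.comp (f := fun y => (t, y)) (by fun_prop) fun y hy =>
      ⟨Ioo_subset_Icc_self ht, subset_closure hy⟩).continuousAt (hΩ.mem_nhds hx)
  have hspace : IsLocalMin (z t) x := by
    filter_upwards [hΩ.mem_nhds hx] with y hy
    exact le_of_mul_le_mul_left (isMinOn_iff.1 hmin (t, y) ⟨right_mem_Icc.2 ht.1.le, hy⟩)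
      (Real.exp_pos _)
  have hweight : HasDerivAt (fun s => Real.exp (-k * s)) (Real.exp (-k * t) * -k) t := by
    simpa using ((hasDerivAt_id t).const_mul (-k)).exp
  have htime := deriv_nonpos_of_isMinOn_Icc ht.1 (hweight.mul (hz.diff_t t ht x hx).hasDerivAt)
    (isMinOn_iff.2 fun s hs => isMinOn_iff.1 hmin (s, x) ⟨hs, hx⟩)
  have htime' : timeDeriv z t x - k * z t x ≤ 0 :=
    nonpos_of_mul_nonpos_right (a := Real.exp (-k * t))
      (by unfold timeDeriv; linarith) (Real.exp_pos _)
  have := laplacian_nonneg_of_isLocalMin hspace hcont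
  unfold heatOp
  linarith

theorem nonneg_of_mul_le_heatOp_of_lt (hΩ : IsOpen Ω) (hb : Bornology.IsBounded Ω)
    (hz : ParabolicRegular Ω S z) {M : ℝ}
    (hop : ∀ t ∈ Ioo 0 S, ∀ x ∈ Ω, z t x < 0 → M * z t x ≤ heatOp z t x)
    (hinit : ∀ x ∈ closure Ω, 0 ≤ z 0 x)
    (hlat : ∀ t ∈ Icc 0 S, ∀ x ∈ frontier Ω, 0 ≤ z t x)
    {T : ℝ} (hT : T ∈ Ico 0 S) {y : Fin n → ℝ} (hy : y ∈ closure Ω) : 0 ≤ z T y := by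
  by_contra! hneg
  set W : ℝ × (Fin n → ℝ) → ℝ := fun p => Real.exp (-(M + 1) * p.1) * z p.1 p.2
  obtain ⟨⟨t, x⟩, ⟨ht, hx⟩, hmin⟩ :
      ∃ p ∈ Icc 0 T ×ˢ closure Ω, IsMinOn W (Icc 0 T ×ˢ closure Ω) p :=
    (isCompact_Icc.prod hb.isCompact_closure).exists_isMinOn ⟨(T, y), ⟨hT.1, le_rfl⟩, hy⟩
      ((by fun_prop : Continuous fun p : ℝ × (Fin n → ℝ) => Real.exp (-(M + 1) * p.1)).continuousOn
        |>.mul (hz.cont.mono (prod_mono (Icc_subset_Icc_right hT.2.le) Subset.rfl)))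
  simp only at ht hx
  have hztx : z t x < 0 := by
    have hWneg : W (t, x) < 0 := (isMinOn_iff.1 hmin (T, y) ⟨⟨hT.1, le_rfl⟩, hy⟩).trans_lt
      (mul_neg_of_pos_of_neg (Real.exp_pos _) hneg)
    exact neg_of_mul_neg_right hWneg (Real.exp_pos _).le
  have htS : t < S := ht.2.trans_lt hT.2
  have ht0 : 0 < t := ht.1.lt_of_ne fun h => hztx.not_ge (h ▸ hinit x hx)
  have hxΩ : x ∈ Ω := by
    by_contra hxΩ
    exact hztx.not_ge (hlat t ⟨ht.1, htS.le⟩ x ⟨hx, by rwa [hΩ.interior_eq]⟩)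
  have hle := hz.heatOp_le_of_isMinOn hΩ ⟨ht0, htS⟩ hxΩ
    (hmin.on_subset (prod_mono (Icc_subset_Icc_right ht.2) subset_closure))
  linarith [hop t ⟨ht0, htS⟩ x hxΩ hztx]

theorem nonneg_of_mul_le_heatOp (hΩ : IsOpen Ω) (hb : Bornology.IsBounded Ω)
    (hz : ParabolicRegular Ω S z) {M : ℝ}
    (hop : ∀ t ∈ Ioo 0 S, ∀ x ∈ Ω, z t x < 0 → M * z t x ≤ heatOp z t x)
    (hinit : ∀ x ∈ closure Ω, 0 ≤ z 0 x)
    (hlat : ∀ t ∈ Icc 0 S, ∀ x ∈ frontier Ω, 0 ≤ z t x) :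
    ∀ t ∈ Icc 0 S, ∀ x ∈ closure Ω, 0 ≤ z t x := by
  intro t ht x hx
  rcases ht.1.eq_or_lt with rfl | ht0
  · exact hinit x hx
  have hS : 0 < S := ht0.trans_le ht.2
  have hcont : ContinuousOn (fun s => z s x) (Icc 0 S) :=
    hz.cont.comp (f := fun s => (s, x)) (by fun_prop) fun s hs => ⟨hs, hx⟩
  rw [← closure_Ico hS.ne] at ht hcont
  exact le_on_closure (f := fun _ => (0 : ℝ))
    (fun s hs => hz.nonneg_of_mul_le_heatOp_of_lt hΩ hb hop hinit hlat hs hx)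
    continuousOn_const hcont ht

theorem le_of_heatOp_add_mul_le (hΩ : IsOpen Ω) (hb : Bornology.IsBounded Ω)
    (hu : ParabolicRegular Ω S u) (hv : ParabolicRegular Ω S v) {C : ℝ}
    (hq : ∀ t ∈ Ioo 0 S, ∀ x ∈ Ω, -C ≤ q t x)
    (hop : ∀ t ∈ Ioo 0 S, ∀ x ∈ Ω, v t x < u t x →
      heatOp u t x + q t x * u t x ≤ heatOp v t x + q t x * v t x)
    (hinit : ∀ x ∈ closure Ω, u 0 x ≤ v 0 x)
    (hlat : ∀ t ∈ Icc 0 S, ∀ x ∈ frontier Ω, u t x ≤ v t x) :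
    ∀ t ∈ Icc 0 S, ∀ x ∈ closure Ω, u t x ≤ v t x := by
  have hdiff := (hv.sub hΩ hu).nonneg_of_mul_le_heatOp hΩ hb (M := C)
    (fun t ht x hx hneg => ?_) (fun x hx => sub_nonneg.2 (hinit x hx))
    fun t ht x hx => sub_nonneg.2 (hlat t ht x hx)
  · exact fun t ht x hx => sub_nonneg.1 (hdiff t ht x hx)
  · rw [hv.heatOp_sub hΩ hu ht hx]
    have hC : C * (v - u) t x ≤ -q t x * (v - u) t x :=
      mul_le_mul_of_nonpos_right (by linarith [hq t ht x hx]) hneg.le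
    simp only [Pi.sub_apply] at hC hneg ⊢
    linarith [hop t ht x hx (sub_neg.1 hneg)]

end ParabolicRegular

namespace IsClassicalSolution

theorem heatOp_add_mul_eq (hu : IsClassicalSolution Ω S q f g u) {t : ℝ} {x : Fin n → ℝ}
    (ht : t ∈ Ioo 0 S) (hx : x ∈ Ω) : heatOp u t x + q t x * u t x = f t x :=
  hu.eqn t ht x hx

theorem const_smul (k : ℝ) (hu : IsClassicalSolution Ω S q f g u) :
    IsClassicalSolution Ω S q (k • f) (k • g) (k • u) where
  toParabolicRegular := hu.toParabolicRegular.const_smul k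
  eqn t ht x hx := by
    change heatOp (k • u) t x + q t x * (k * u t x) = k * f t x
    rw [heatOp_const_smul, ← hu.heatOp_add_mul_eq ht hx, Pi.smul_apply, Pi.smul_apply,
      smul_eq_mul]
    ring
  lateral t ht x hx := congrArg (k * ·) (hu.lateral t ht x hx)
  initial x hx := by simp [hu.initial x hx]

theorem nonneg_of_mul_le (hΩ : IsOpen Ω) (hb : Bornology.IsBounded Ω)
    (hu : IsClassicalSolution Ω S q f g u) {C L : ℝ} (hq : ∀ t ∈ Ioo 0 S, ∀ x ∈ Ω, -C ≤ q t x)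
    (hf : ∀ t ∈ Ioo 0 S, ∀ x ∈ Ω, u t x < 0 → L * u t x ≤ f t x)
    (hg : ∀ t ∈ Icc 0 S, ∀ x ∈ frontier Ω, 0 ≤ g t x) :
    ∀ t ∈ Icc 0 S, ∀ x ∈ closure Ω, 0 ≤ u t x := by
  refine hu.toParabolicRegular.nonneg_of_mul_le_heatOp hΩ hb (M := L + C)
    (fun t ht x hx hneg => ?_) (fun x hx => (hu.initial x hx).ge)
    fun t ht x hx => (hg t ht x hx).trans_eq (hu.lateral t ht x hx).symm
  linarith [hu.heatOp_add_mul_eq ht hx, hf t ht x hx hneg,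
    mul_le_mul_of_nonpos_right (hq t ht x hx) hneg.le]

theorem nonneg (hΩ : IsOpen Ω) (hb : Bornology.IsBounded Ω)
    (hu : IsClassicalSolution Ω S q f g u) {C : ℝ} (hq : ∀ t ∈ Ioo 0 S, ∀ x ∈ Ω, -C ≤ q t x)
    (hf : ∀ t ∈ Ioo 0 S, ∀ x ∈ Ω, 0 ≤ f t x)
    (hg : ∀ t ∈ Icc 0 S, ∀ x ∈ frontier Ω, 0 ≤ g t x) :
    ∀ t ∈ Icc 0 S, ∀ x ∈ closure Ω, 0 ≤ u t x :=
  hu.nonneg_of_mul_le hΩ hb hq (L := 0)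
    (fun t ht x hx _ => (zero_mul (u t x)).trans_le (hf t ht x hx)) hg

theorem mul_le_of_le_lateral (hΩ : IsOpen Ω) (hb : Bornology.IsBounded Ω)
    {χ w : ℝ → (Fin n → ℝ) → ℝ} (hw : IsClassicalSolution Ω S q (fun _ _ => 0) χ w)
    (hu : IsClassicalSolution Ω S (fun _ _ => 0) f g u) {C L r : ℝ} (hr : 0 ≤ r)
    (hq : ∀ t ∈ Ioo 0 S, ∀ x ∈ Ω, -C ≤ q t x)
    (hfneg : ∀ t ∈ Ioo 0 S, ∀ x ∈ Ω, u t x < 0 → L * u t x ≤ f t x)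
    (hfpos : ∀ t ∈ Ioo 0 S, ∀ x ∈ Ω, 0 ≤ u t x → -(q t x * u t x) ≤ f t x)
    (hχ : ∀ t ∈ Icc 0 S, ∀ x ∈ frontier Ω, 0 ≤ χ t x)
    (hg : ∀ t ∈ Icc 0 S, ∀ x ∈ frontier Ω, r * χ t x ≤ g t x) :
    ∀ t ∈ Icc 0 S, ∀ x ∈ closure Ω, r * w t x ≤ u t x := by
  have hu0 := hu.nonneg_of_mul_le hΩ hb (C := 0) (by simp) hfneg fun t ht x hx =>
    (mul_nonneg hr (hχ t ht x hx)).trans (hg t ht x hx)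
  have hrw := hw.const_smul r
  refine hrw.toParabolicRegular.le_of_heatOp_add_mul_le hΩ hb hu.toParabolicRegular hq
    (fun t ht x hx _ => ?_)
    (fun x hx => ((hrw.initial x hx).trans (hu.initial x hx).symm).le) fun t ht x hx => ?_
  · have hsource : heatOp u t x = f t x := by simpa using hu.heatOp_add_mul_eq ht hx
    have hzero : heatOp (r • w) t x + q t x * (r • w) t x = 0 := by
      simpa using hrw.heatOp_add_mul_eq ht hx
    change heatOp (r • w) t x + q t x * (r • w) t x ≤ _
    rw [hzero, hsource]
    linarith [hfpos t ht x hx (hu0 t (Ioo_subset_Icc_self ht) x (subset_closure hx))]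
  · exact (hrw.lateral t ht x hx).trans_le ((hg t ht x hx).trans_eq (hu.lateral t ht x hx).symm)

end IsClassicalSolution

end MaximumPrinciple

section Positivity

variable {n : ℕ} {Ω : Set (Fin n → ℝ)} {S : ℝ} {q f g u : ℝ → (Fin n → ℝ) → ℝ}

/-- The subsolution `η (exp (a (t - t₀) + b · x - β) - 1)`. On a set where `b · x ≤ β` it is
nonpositive up to time `t₀`, so it may be compared with nonnegative solutions from time `0` on. -/
noncomputable def barrier (η a : ℝ) (b : Fin n → ℝ) (t₀ β : ℝ) : ℝ → (Fin n → ℝ) → ℝ :=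
  η • (expWave a b (-a * t₀ - β) - fun _ _ => 1)

theorem barrier_apply (η a : ℝ) (b : Fin n → ℝ) (t₀ β t : ℝ) (x : Fin n → ℝ) :
    barrier η a b t₀ β t x = η * (Real.exp (a * (t - t₀) + b ⬝ᵥ x - β) - 1) := by
  simp only [barrier, expWave, Pi.smul_apply, Pi.sub_apply, smul_eq_mul]
  ring_nf

theorem barrier_le_mul_exp {η a β t₀ : ℝ} {b x : Fin n → ℝ} (hη : 0 ≤ η) (hβ : b ⬝ᵥ x ≤ β) (t : ℝ) :
    barrier η a b t₀ β t x ≤ η * (Real.exp (a * (t - t₀)) - 1) := by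
  rw [barrier_apply]
  gcongr
  linarith

theorem barrier_nonpos {η a β t₀ t : ℝ} {b x : Fin n → ℝ} (hη : 0 ≤ η) (ha : 0 ≤ a)
    (hβ : b ⬝ᵥ x ≤ β) (ht : t ≤ t₀) : barrier η a b t₀ β t x ≤ 0 :=
  (barrier_le_mul_exp hη hβ t).trans <| mul_nonpos_of_nonneg_of_nonpos hη <| sub_nonpos.2 <|
    Real.exp_le_one_iff.2 <| mul_nonpos_of_nonneg_of_nonpos ha (sub_nonpos.2 ht)

theorem parabolicRegular_barrier (hΩ : IsOpen Ω) (η a : ℝ) (b : Fin n → ℝ) (t₀ β : ℝ) :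
    ParabolicRegular Ω S (barrier η a b t₀ β) :=
  ((parabolicRegular_expWave _ _ _).sub hΩ (.const 1)).const_smul η

theorem heatOp_barrier (η a : ℝ) (b : Fin n → ℝ) (t₀ β t : ℝ) (x : Fin n → ℝ) :
    heatOp (barrier η a b t₀ β) t x = (a - b ⬝ᵥ b) * (barrier η a b t₀ β t x + η) := by
  rw [barrier, heatOp_const_smul, Pi.smul_apply, Pi.smul_apply, heatOp_sub_const, heatOp_expWave]
  simp only [Pi.smul_apply, Pi.sub_apply, smul_eq_mul]
  ring

namespace IsClassicalSolution

theorem barrier_le (hΩ : IsOpen Ω) (hb : Bornology.IsBounded Ω)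
    (hu : IsClassicalSolution Ω S q f g u) {C : ℝ} (hq : ∀ t ∈ Ioo 0 S, ∀ x ∈ Ω, |q t x| ≤ C)
    (hf : ∀ t ∈ Ioo 0 S, ∀ x ∈ Ω, 0 ≤ f t x)
    (hg : ∀ t ∈ Icc 0 S, ∀ x ∈ frontier Ω, 0 ≤ g t x) {η a β t₀ : ℝ} {b : Fin n → ℝ}
    (hη : 0 ≤ η) (ha : 0 ≤ a) (hab : a = b ⬝ᵥ b - C) (hβ : ∀ x ∈ closure Ω, b ⬝ᵥ x ≤ β)
    (ht₀ : 0 ≤ t₀)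
    (hlat : ∀ t ∈ Icc t₀ S, ∀ x ∈ frontier Ω, η * Real.exp (a * (S - t₀)) ≤ g t x) :
    ∀ t ∈ Icc 0 S, ∀ x ∈ closure Ω, barrier η a b t₀ β t x ≤ u t x := by
  have hqC : ∀ t ∈ Ioo 0 S, ∀ x ∈ Ω, -C ≤ q t x := fun t ht x hx =>
    neg_le_of_abs_le (hq t ht x hx)
  have hu0 := hu.nonneg hΩ hb hqC hf hg
  refine (parabolicRegular_barrier hΩ η a b t₀ β).le_of_heatOp_add_mul_le hΩ hb
    hu.toParabolicRegular hqC (fun t ht x hx hlt => ?_)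
    (fun x hx => (barrier_nonpos hη ha (hβ x hx) ht₀).trans_eq (hu.initial x hx).symm)
    fun t ht x hx => ?_
  · have hpos : 0 ≤ barrier η a b t₀ β t x :=
      (hu0 t (Ioo_subset_Icc_self ht) x (subset_closure hx)).trans hlt.le
    have hqle := mul_le_mul_of_nonneg_right (le_of_abs_le (hq t ht x hx)) hpos
    have hCη : 0 ≤ C * η := mul_nonneg ((abs_nonneg _).trans (hq t ht x hx)) hη
    have hcoef : a - b ⬝ᵥ b = -C := by linarith
    rw [heatOp_barrier, hu.heatOp_add_mul_eq ht hx, hcoef]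
    linarith [hf t ht x hx]
  · rw [hu.lateral t ht x hx]
    have hβx := hβ x (frontier_subset_closure hx)
    rcases le_total t t₀ with h | h
    · exact (barrier_nonpos hη ha hβx h).trans (hg t ht x hx)
    · calc barrier η a b t₀ β t x ≤ η * (Real.exp (a * (t - t₀)) - 1) := barrier_le_mul_exp hη hβx t
        _ ≤ η * Real.exp (a * (S - t₀)) := by
          refine mul_le_mul_of_nonneg_left ?_ hη
          exact (sub_le_self _ zero_le_one).trans (by gcongr; exact ht.2)
        _ ≤ g t x := hlat t ⟨h, ht.2⟩ x hx

theorem pos_of_le_lateral [Nonempty (Fin n)] (hΩ : IsOpen Ω) (hb : Bornology.IsBounded Ω)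
    (hu : IsClassicalSolution Ω S q f g u) {C : ℝ} (hq : ∀ t ∈ Ioo 0 S, ∀ x ∈ Ω, |q t x| ≤ C)
    (hf : ∀ t ∈ Ioo 0 S, ∀ x ∈ Ω, 0 ≤ f t x)
    (hg : ∀ t ∈ Icc 0 S, ∀ x ∈ frontier Ω, 0 ≤ g t x) {t₀ m : ℝ} (ht₀ : 0 ≤ t₀) (hm : 0 < m)
    (hgm : ∀ t ∈ Icc t₀ S, ∀ x ∈ frontier Ω, m ≤ g t x) :
    ∀ t ∈ Ioc t₀ S, ∀ x ∈ closure Ω, 0 < u t x := by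
  intro t ht x hx
  obtain ⟨i⟩ := ‹Nonempty (Fin n)›
  obtain ⟨R, hR⟩ := hb.closure.exists_norm_le
  obtain ⟨B, hB, hBC⟩ := exists_pos_mul_lt_sq_sub_mul (2 * R) C (sub_pos.2 ht.1)
  set b : Fin n → ℝ := Pi.single i B
  have hdot : ∀ y ∈ closure Ω, |b ⬝ᵥ y| ≤ B * R := fun y hy => by
    rw [single_dotProduct, abs_mul, abs_of_pos hB]
    gcongr
    exact (norm_le_pi_norm y i).trans (hR y hy)
  have hbb : b ⬝ᵥ b = B ^ 2 := by simp [b, sq]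
  have ha : 0 < b ⬝ᵥ b - C := by
    rw [hbb]
    have hR0 : 0 ≤ R := (norm_nonneg x).trans (hR x hx)
    have hprod : 0 < (B ^ 2 - C) * (t - t₀) := lt_of_le_of_lt (by positivity) hBC
    exact pos_of_mul_pos_left hprod (sub_pos.2 ht.1).le
  have hpos : 0 < barrier (m * Real.exp (-((b ⬝ᵥ b - C) * (S - t₀)))) (b ⬝ᵥ b - C) b t₀ (B * R)
      t x := by
    rw [barrier_apply]
    refine mul_pos (by positivity) (sub_pos.2 (Real.one_lt_exp_iff.2 ?_))
    rw [hbb]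
    linarith [neg_le_of_abs_le (hdot x hx)]
  refine hpos.trans_le (hu.barrier_le hΩ hb hq hf hg (by positivity) ha.le rfl
    (fun y hy => le_of_abs_le (hdot y hy)) ht₀ (fun s hs y hy => ?_) t
    ⟨ht₀.trans ht.1.le, ht.2⟩ x hx)
  rw [mul_assoc, ← Real.exp_add, neg_add_cancel, Real.exp_zero, mul_one]
  exact hgm s hs y hy

theorem pos_of_lateral_pos [Nonempty (Fin n)] (hΩ : IsOpen Ω) (hb : Bornology.IsBounded Ω)
    (hu : IsClassicalSolution Ω S q f g u) {C : ℝ} (hq : ∀ t ∈ Ioo 0 S, ∀ x ∈ Ω, |q t x| ≤ C)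
    (hf : ∀ t ∈ Ioo 0 S, ∀ x ∈ Ω, 0 ≤ f t x)
    (hg : ∀ t ∈ Icc 0 S, ∀ x ∈ frontier Ω, 0 ≤ g t x) {t₁ : ℝ} (ht₁ : 0 < t₁)
    (hgpos : ∀ t ∈ Icc t₁ S, ∀ x ∈ frontier Ω, 0 < g t x) :
    ∀ t ∈ Icc t₁ S, ∀ x ∈ closure Ω, 0 < u t x := by
  intro t ht x hx
  have hK : IsCompact (frontier Ω) :=
    hb.isCompact_closure.of_isClosed_subset isClosed_frontier frontier_subset_closure
  have hcont : ContinuousOn (fun p : ℝ × (Fin n → ℝ) => u p.1 p.2) (Icc 0 S ×ˢ frontier Ω) :=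
    hu.cont.mono (prod_mono Subset.rfl frontier_subset_closure)
  obtain ⟨t₀, ht₀, hpos⟩ := exists_Icc_forall_pos hK ht₁ (ht.1.trans ht.2) hcont
    fun s hs y hy => (hgpos s hs y hy).trans_eq (hu.lateral s ⟨ht₁.le.trans hs.1, hs.2⟩ y hy).symm
  obtain ⟨m, hm, hle⟩ := (isCompact_Icc.prod hK).exists_forall_le'
    (hcont.mono (prod_mono (Icc_subset_Icc_left ht₀.1) Subset.rfl))
    fun p hp => hpos p.1 hp.1 p.2 hp.2
  refine hu.pos_of_le_lateral hΩ hb hq hf hg ht₀.1 hm (fun s hs y hy => ?_) t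
    ⟨ht₀.2.trans_le ht.1, ht.2⟩ x hx
  exact (hle (s, y) ⟨hs, hy⟩).trans_eq (hu.lateral s ⟨ht₀.1.trans hs.1, hs.2⟩ y hy)

end IsClassicalSolution

end Positivity

section Semilinear

variable {n : ℕ} {Ω : Set (Fin n → ℝ)} {S : ℝ} {F : ℝ → (Fin n → ℝ) → ℝ → ℝ}
  {q χ v w : ℝ → (Fin n → ℝ) → ℝ}

/-- The nonlinearity `F(t,x,u)` is at most `q(t,x) u` for `u ≥ 0` and at least `q(t,x) u` for
`u ≤ 0`, at every interior point `(t,x)`. This is what concavity of `F` on `u ≥ 0`, convexity on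
`u ≤ 0` and `∂ᵤF(t,x,0) ≤ q(t,x)` contribute to the comparison with the linear equation. -/
def DominatedByLinear (Ω : Set (Fin n → ℝ)) (S : ℝ) (F : ℝ → (Fin n → ℝ) → ℝ → ℝ)
    (q : ℝ → (Fin n → ℝ) → ℝ) : Prop :=
  ∀ t ∈ Ioo 0 S, ∀ x ∈ Ω,
    (∀ u, 0 ≤ u → F t x u ≤ q t x * u) ∧ ∀ u, u ≤ 0 → q t x * u ≤ F t x u

theorem DominatedByLinear.map_zero (hF : DominatedByLinear Ω S F q) {t : ℝ} {x : Fin n → ℝ}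
    (ht : t ∈ Ioo 0 S) (hx : x ∈ Ω) : F t x 0 = 0 :=
  le_antisymm (by simpa using (hF t ht x hx).1 0 le_rfl) (by simpa using (hF t ht x hx).2 0 le_rfl)

theorem C2InU.dominatedByLinear (hF : C2InU Ω S F)
    (hF0 : ∀ t ∈ Ioo 0 S, ∀ x ∈ Ω, F t x 0 = 0)
    (hpos : ∀ t ∈ Ioo 0 S, ∀ x ∈ Ω, ∀ u, 0 ≤ u → uDeriv2 F t x u ≤ 0)
    (hneg : ∀ t ∈ Ioo 0 S, ∀ x ∈ Ω, ∀ u, u ≤ 0 → 0 ≤ uDeriv2 F t x u)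
    (hq : ∀ t ∈ Ioo 0 S, ∀ x ∈ Ω, uDeriv F t x 0 ≤ q t x) : DominatedByLinear Ω S F q := by
  intro t ht x hx
  have hd : Differentiable ℝ (F t x) :=
    hF.1.2.1 t (Ioo_subset_Icc_self ht) x (subset_closure hx)
  have hd2 : Differentiable ℝ (deriv (F t x)) :=
    hF.2.1 t (Ioo_subset_Icc_self ht) x (subset_closure hx)
  have hconcave : ConcaveOn ℝ (Ici 0) (F t x) :=
    concaveOn_of_deriv2_nonpos' (convex_Ici 0) hd.differentiableOn hd2.differentiableOn
      (hpos t ht x hx)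
  have hconvex : ConvexOn ℝ (Iic 0) (F t x) :=
    convexOn_of_deriv2_nonneg' (convex_Iic 0) hd.differentiableOn hd2.differentiableOn
      (hneg t ht x hx)
  refine ⟨fun u hu => ?_, fun u hu => ?_⟩
  · have htangent := le_deriv_mul_sub_of_concaveOn hconcave self_mem_Ici hu (hd 0)
    rw [hF0 t ht x hx, sub_zero, sub_zero] at htangent
    exact htangent.trans (mul_le_mul_of_nonneg_right (hq t ht x hx) hu)
  · have htangent := deriv_mul_sub_le_of_convexOn hconvex self_mem_Iic hu (hd 0)
    rw [hF0 t ht x hx, sub_zero, sub_zero] at htangent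
    exact (mul_le_mul_of_nonpos_right (hq t ht x hx) hu).trans htangent

theorem C1InU.exists_lipschitzOnWith (hb : Bornology.IsBounded Ω) (hF : C1InU Ω S F) (R : ℝ) :
    ∃ L, ∀ t ∈ Icc 0 S, ∀ x ∈ closure Ω, LipschitzOnWith L (F t x) (Icc (-R) R) := by
  have hK : IsCompact (Icc 0 S ×ˢ closure Ω ×ˢ Icc (-R) R) :=
    isCompact_Icc.prod (hb.isCompact_closure.prod isCompact_Icc)
  obtain ⟨L, hL⟩ := hK.exists_bound_of_continuousOn
    (hF.2.2.mono (prod_mono Subset.rfl (prod_mono Subset.rfl (subset_univ _))))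
  refine ⟨L.toNNReal, fun t ht x hx => (convex_Icc _ _).lipschitzOnWith_of_nnnorm_deriv_le
    (fun u _ => hF.2.1 t ht x hx u) fun u hu => ?_⟩
  rw [← norm_toNNReal]
  exact Real.toNNReal_le_toNNReal (hL (t, x, u) ⟨ht, hx, hu⟩)

theorem C1InU.exists_abs_le_mul_abs (hb : Bornology.IsBounded Ω) (hF : C1InU Ω S F)
    (hF0 : ∀ t ∈ Ioo 0 S, ∀ x ∈ Ω, F t x 0 = 0)
    (hv : ContinuousOn (fun p : ℝ × (Fin n → ℝ) => v p.1 p.2) (Icc 0 S ×ˢ closure Ω)) :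
    ∃ L, ∀ t ∈ Ioo 0 S, ∀ x ∈ Ω, |F t x (v t x)| ≤ L * |v t x| := by
  obtain ⟨R, hR⟩ := (isCompact_Icc.prod hb.isCompact_closure).exists_bound_of_continuousOn hv
  obtain ⟨L, hL⟩ := hF.exists_lipschitzOnWith hb R
  refine ⟨L, fun t ht x hx => ?_⟩
  have ht' := Ioo_subset_Icc_self ht
  have hvR : |v t x| ≤ R := hR (t, x) ⟨ht', subset_closure hx⟩
  have hR0 : 0 ≤ R := (abs_nonneg _).trans hvR
  simpa [Real.dist_eq, hF0 t ht x hx] using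
    (hL t ht' x (subset_closure hx)).dist_le_mul (v t x) (abs_le.1 hvR) 0 ⟨neg_nonpos.2 hR0, hR0⟩

namespace DominatedByLinear

theorem mul_le (hΩ : IsOpen Ω) (hb : Bornology.IsBounded Ω) (hFq : DominatedByLinear Ω S F q)
    (hF : C1InU Ω S F) {C r : ℝ} (hq : ∀ t ∈ Ioo 0 S, ∀ x ∈ Ω, -C ≤ q t x) (hr : 0 ≤ r)
    (hχ : ∀ t ∈ Icc 0 S, ∀ x ∈ frontier Ω, 0 ≤ χ t x)
    (hw : IsClassicalSolution Ω S q (fun _ _ => 0) χ w)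
    (hv : IsClassicalSolution Ω S (fun _ _ => 0) (fun t x => -F t x (v t x))
      (fun t x => r * χ t x) v) :
    ∀ t ∈ Icc 0 S, ∀ x ∈ closure Ω, r * w t x ≤ v t x := by
  obtain ⟨L, hL⟩ := hF.exists_abs_le_mul_abs hb (fun _ ht _ hx => hFq.map_zero ht hx) hv.cont
  refine hw.mul_le_of_le_lateral hΩ hb hv hr hq (L := L) (fun t ht x hx hneg => ?_)
    (fun t ht x hx h0 => neg_le_neg ((hFq t ht x hx).1 _ h0)) hχ fun _ _ _ _ => le_rfl
  have hbound := hL t ht x hx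
  rw [abs_of_neg hneg] at hbound
  linarith [le_of_abs_le hbound]

theorem le_neg_mul (hΩ : IsOpen Ω) (hb : Bornology.IsBounded Ω) (hFq : DominatedByLinear Ω S F q)
    (hF : C1InU Ω S F) {C r : ℝ} (hq : ∀ t ∈ Ioo 0 S, ∀ x ∈ Ω, -C ≤ q t x) (hr : 0 ≤ r)
    (hχ : ∀ t ∈ Icc 0 S, ∀ x ∈ frontier Ω, 0 ≤ χ t x)
    (hw : IsClassicalSolution Ω S q (fun _ _ => 0) χ w)
    (hv : IsClassicalSolution Ω S (fun _ _ => 0) (fun t x => -F t x (v t x))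
      (fun t x => -r * χ t x) v) :
    ∀ t ∈ Icc 0 S, ∀ x ∈ closure Ω, v t x ≤ -(r * w t x) := by
  obtain ⟨L, hL⟩ := hF.exists_abs_le_mul_abs hb (fun _ ht _ hx => hFq.map_zero ht hx) hv.cont
  have hle := hw.mul_le_of_le_lateral hΩ hb (hv.const_smul (-1)) hr hq (L := L)
    (fun t ht x hx hneg => ?_) (fun t ht x hx h0 => ?_) hχ fun t _ x _ => ?_
  · intro t ht x hx
    have hrw : r * w t x ≤ -1 * v t x := hle t ht x hx
    linarith
  · have hpos : 0 < v t x := by simpa using hneg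
    have hbound := hL t ht x hx
    rw [abs_of_pos hpos] at hbound
    simp only [Pi.smul_apply, smul_eq_mul]
    linarith [neg_le_of_abs_le hbound]
  · have hnonpos : v t x ≤ 0 := by simpa using h0
    simpa using (hFq t ht x hx).2 _ hnonpos
  · simp

end DominatedByLinear

end Semilinear

end Paper

theorem statement6_general {n : ℕ} [Nonempty (Fin n)] {Ω : Set (Fin n → ℝ)} (hΩo : IsOpen Ω)
    (hΩb : Bornology.IsBounded Ω) (hΩne : Ω.Nonempty) {S δ₁ r : ℝ} (hδ₁ : 0 < δ₁)
    (hδ₁S : δ₁ ≤ S) (hr : 0 ≤ r) {χ : ℝ → (Fin n → ℝ) → ℝ}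
    (hχ0 : ∀ t ∈ Icc 0 S, ∀ x ∈ frontier Ω, 0 ≤ χ t x)
    (hχpos : ∀ t ∈ Icc δ₁ S, ∀ x ∈ frontier Ω, 0 < χ t x) {q : ℝ → (Fin n → ℝ) → ℝ}
    (hqb : ∃ C, ∀ t ∈ Ioo 0 S, ∀ x ∈ Ω, |q t x| ≤ C) {F : ℝ → (Fin n → ℝ) → ℝ → ℝ}
    (hF : C1InU Ω S F) (hFq : DominatedByLinear Ω S F q) {v : ℝ → ℝ → (Fin n → ℝ) → ℝ}
    (hv : ∀ lam ∈ Icc (-r) r, IsClassicalSolution Ω S (fun _ _ => 0)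
      (fun t x => -F t x (v lam t x)) (fun t x => lam * χ t x) (v lam))
    (hvc : ∀ t ∈ Icc δ₁ S, ∀ x ∈ closure Ω, ContinuousOn (fun lam => v lam t x) (Icc (-r) r))
    {w : ℝ → (Fin n → ℝ) → ℝ} (hw : IsClassicalSolution Ω S q (fun _ _ => 0) χ w) :
    0 < sInf ((fun p : ℝ × (Fin n → ℝ) => w p.1 p.2) '' (Icc δ₁ S ×ˢ closure Ω)) ∧
    ∀ t₀ ∈ Icc δ₁ S, ∀ x₀ ∈ closure Ω, SurjOn (fun lam => v lam t₀ x₀) (Icc (-r) r)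
      (Icc (-(sInf ((fun p : ℝ × (Fin n → ℝ) => w p.1 p.2) '' (Icc δ₁ S ×ˢ closure Ω)) * r))
        (sInf ((fun p : ℝ × (Fin n → ℝ) => w p.1 p.2) '' (Icc δ₁ S ×ˢ closure Ω)) * r)) := by
  obtain ⟨C, hC⟩ := hqb
  have hqC : ∀ t ∈ Ioo 0 S, ∀ x ∈ Ω, -C ≤ q t x := fun t ht x hx =>
    neg_le_of_abs_le (hC t ht x hx)
  have hK : IsCompact (Icc δ₁ S ×ˢ closure Ω) := isCompact_Icc.prod hΩb.isCompact_closure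
  have hwc : ContinuousOn (fun p : ℝ × (Fin n → ℝ) => w p.1 p.2) (Icc δ₁ S ×ˢ closure Ω) :=
    hw.cont.mono (prod_mono (Icc_subset_Icc_left hδ₁.le) Subset.rfl)
  have hwpos := hw.pos_of_lateral_pos hΩo hΩb hC (fun _ _ _ _ => le_rfl) hχ0 hδ₁ hχpos
  refine ⟨sInf_image_pos hK ((nonempty_Icc.2 hδ₁S).prod hΩne.closure) hwc
    fun p hp => hwpos p.1 hp.1 p.2 hp.2, fun t₀ ht₀ x₀ hx₀ => ?_⟩
  have hinf := mul_le_mul_of_nonneg_right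
    (csInf_le (hK.image_of_continuousOn hwc).bddBelow ⟨(t₀, x₀), ⟨ht₀, hx₀⟩, rfl⟩) hr
  have ht₀' : t₀ ∈ Icc 0 S := ⟨hδ₁.le.trans ht₀.1, ht₀.2⟩
  have hr' : -r ≤ r := neg_le_self hr
  have hup := hFq.mul_le hΩo hΩb hF hqC hr hχ0 hw (hv r ⟨hr', le_rfl⟩) t₀ ht₀' x₀ hx₀
  have hlow := hFq.le_neg_mul hΩo hΩb hF hqC hr hχ0 hw (hv (-r) ⟨le_rfl, hr'⟩) t₀ ht₀' x₀ hx₀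
  refine (Icc_subset_Icc ?_ ?_).trans (intermediate_value_Icc hr' (hvc t₀ ht₀ x₀ hx₀)) <;>
    linarith

/-- range of the boundary values of the semilinear family: under the
structural assumptions on `F` and the first and second linearizations of the family `v_λ`,
the constant `a₁ := inf_{[δ₁,S] × cl Ω} w` is strictly positive and the set of values
`{v_λ(t₀,x₀) : λ ∈ [−r,r]}` contains `[−a₁r, a₁r]` for every `(t₀,x₀) ∈ (δ₁,S) × Ω`. -/
theorem statement6 {n : ℕ} (hn : 2 ≤ n) (Ω : Set (Fin n → ℝ)) (hΩo : IsOpen Ω)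
    (hΩb : Bornology.IsBounded Ω) (hΩc : IsConnected Ω)
    (S δ₁ δ₂ r : ℝ) (hS : 0 < S) (hδ₁ : 0 < δ₁) (hδ₁S : δ₁ < S) (hδ₂ : 0 < δ₂) (hr : 0 < r)
    (χ : ℝ → (Fin n → ℝ) → ℝ)
    (hχc : ContinuousOn (fun p : ℝ × (Fin n → ℝ) => χ p.1 p.2) (Icc 0 S ×ˢ frontier Ω))
    (hχ0 : ∀ t ∈ Icc 0 S, ∀ x ∈ frontier Ω, 0 ≤ χ t x)
    (hχδ : ∀ t ∈ Icc δ₁ S, ∀ x ∈ frontier Ω, χ t x = δ₂)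
    (q : ℝ → (Fin n → ℝ) → ℝ)
    (hqc : ContinuousOn (fun p : ℝ × (Fin n → ℝ) => q p.1 p.2) (Ioo 0 S ×ˢ Ω))
    (hqb : ∃ C, ∀ t ∈ Ioo 0 S, ∀ x ∈ Ω, |q t x| ≤ C)
    (F : ℝ → (Fin n → ℝ) → ℝ → ℝ) (hF : C2InU Ω S F)
    (hF0 : ∀ t ∈ Icc 0 S, ∀ x ∈ closure Ω, F t x 0 = 0)
    (hFconc : ∀ t ∈ Icc 0 S, ∀ x ∈ closure Ω,
      (∀ u : ℝ, 0 ≤ u → uDeriv2 F t x u ≤ 0) ∧ (∀ u : ℝ, u ≤ 0 → 0 ≤ uDeriv2 F t x u))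
    (hFq : ∀ t ∈ Ioo 0 S, ∀ x ∈ Ω, uDeriv F t x 0 ≤ q t x)
    (v v1 v2 : ℝ → ℝ → (Fin n → ℝ) → ℝ)
    (hfam : SemilinearFamily Ω S r χ F v v1 v2)
    (w : ℝ → (Fin n → ℝ) → ℝ)
    (hw : IsClassicalSolution Ω S q (fun _ _ => (0 : ℝ)) χ w) :
    0 < sInf ((fun p : ℝ × (Fin n → ℝ) => w p.1 p.2) '' (Icc δ₁ S ×ˢ closure Ω)) ∧
    ∀ t₀ ∈ Ioo δ₁ S, ∀ x₀ ∈ Ω,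
      ∀ s ∈ Icc (-(sInf ((fun p : ℝ × (Fin n → ℝ) => w p.1 p.2) ''
            (Icc δ₁ S ×ˢ closure Ω)) * r))
          (sInf ((fun p : ℝ × (Fin n → ℝ) => w p.1 p.2) '' (Icc δ₁ S ×ˢ closure Ω)) * r),
        ∃ lam ∈ Icc (-r) r, v lam t₀ x₀ = s := by
  have : Nonempty (Fin n) := ⟨⟨0, by lia⟩⟩
  have hFlin : DominatedByLinear Ω S F q := hF.dominatedByLinear
    (fun t ht x hx => hF0 t (Ioo_subset_Icc_self ht) x (subset_closure hx))
    (fun t ht x hx => (hFconc t (Ioo_subset_Icc_self ht) x (subset_closure hx)).1)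
    (fun t ht x hx => (hFconc t (Ioo_subset_Icc_self ht) x (subset_closure hx)).2) hFq
  obtain ⟨hpos, hsurj⟩ := statement6_general hΩo hΩb hΩc.nonempty hδ₁ hδ₁S.le hr.le hχ0
    (fun t ht x hx => hδ₂.trans_eq (hχδ t ht x hx).symm) hqb hF.1 hFlin hfam.sol
    (fun t ht => hfam.cont_lam t ⟨hδ₁.le.trans ht.1, ht.2⟩) hw
  exact ⟨hpos, fun t₀ ht₀ x₀ hx₀ _ hs =>
    hsurj t₀ (Ioo_subset_Icc_self ht₀) x₀ (subset_closure hx₀) hs⟩
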